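/- Let G be a finitely generated group with finite generating set X, let L be a language over a finite alphabet, and let t : ℕ → ℕ. If for every constant C > 0 the function n ↦ g_G^X(C·t(n)) is o(U_L(n)) (its ratio to U_L(n) tends to 0 as n → ∞), then L is not recognized by any weakly t(n) time-bounded G-automaton, i.e., L ∉ 𝔏(G)^w_{t(n)}. -/

import Mathlib

/-- A `G`-automaton over input alphabet `α`: a nondeterministic finite automaton
equipped with a register holding an element of the group `G`. -/
structure GAutomaton (α : Type*) (G : Type*) [Group G] where
  /-- the (finite) state set -/
  Q : Type
  finQ : Finite Q
  /-- the initial state -/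
  q0 : Q
  /-- the accepting states -/
  acc : Set Q
  /-- the (finite) transition relation; `none` stands for ε -/
  δ : Set (Q × Option α × Q × G)
  finδ : δ.Finite

namespace GAutomaton

variable {α : Type*} {G : Type*} [Group G]

/-- One computation step between configurations `(state, register, remaining input)`. -/
def Step (M : GAutomaton α G) (c c' : M.Q × G × List α) : Prop :=
  ∃ σ m, (c.1, σ, c'.1, m) ∈ M.δ ∧ c'.2.1 = c.2.1 * m ∧
    match σ with
    | none => c'.2.2 = c.2.2
    | some s => c.2.2 = s :: c'.2.2

/-- `M.StepsIn k c c'` : configuration `c'` is reachable from `c` in exactly `k` steps. -/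
def StepsIn (M : GAutomaton α G) : ℕ → (M.Q × G × List α) → (M.Q × G × List α) → Prop
  | 0, c, c' => c = c'
  | n + 1, c, c' => ∃ d, M.Step c d ∧ M.StepsIn n d c'

/-- `M` accepts the word `w` within `t` computation steps. -/
def AcceptsIn (M : GAutomaton α G) (w : List α) (t : ℕ) : Prop :=
  ∃ k ≤ t, ∃ q ∈ M.acc, M.StepsIn k (M.q0, 1, w) (q, 1, [])

/-- The language recognized by `M`. -/
def lang (M : GAutomaton α G) : Language α := {w | ∃ t, M.AcceptsIn w t}

/-- `M` is real-time if every transition consumes an input symbol. -/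
def RealTime (M : GAutomaton α G) : Prop := ∀ tr ∈ M.δ, tr.2.1 ≠ none

end GAutomaton

/-- `L ∈ 𝔏(G)` : the language `L` is recognized by some `G`-automaton. -/
def GRecognizable (G : Type*) [Group G] {α : Type*} (L : Language α) : Prop :=
  ∃ M : GAutomaton α G, M.lang = L

/-- `L ∈ 𝔏(G)ʷ_{t(n)}` : `L` is recognized by a weakly `t(n)` time-bounded `G`-automaton. -/
def GRecognizableInTime (G : Type*) [Group G] {α : Type*} (L : Language α) (t : ℕ → ℕ) : Prop :=
  ∃ M : GAutomaton α G, M.lang = L ∧ ∀ w ∈ L, M.AcceptsIn w (t w.length)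

/-- `L ∈ 𝔏(G)ʷ_{O(n)}` : `L` is recognized by a weakly linear-time bounded `G`-automaton. -/
def GRecognizableLinTime (G : Type*) [Group G] {α : Type*} (L : Language α) : Prop :=
  ∃ C : ℕ, GRecognizableInTime G L (fun n => C * n + C)

/-- `S` is a set of pairwise `n`-dissimilar strings for `L`: all members have length
`≤ n`, and any two distinct members are `n`-dissimilar. -/
def PairwiseDissimilar {α : Type*} (L : Language α) (n : ℕ) (S : Finset (List α)) : Prop :=
  (∀ w ∈ S, w.length ≤ n) ∧
    ∀ w ∈ S, ∀ w' ∈ S, w ≠ w' →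
      ∃ v : List α, (w ++ v).length ≤ n ∧ (w' ++ v).length ≤ n ∧
        ((w ++ v) ∈ L ↔ (w' ++ v) ∉ L)

/-- `A_L(n)` : the maximum cardinality of a set of pairwise `n`-dissimilar strings. -/
noncomputable def dissimA {α : Type*} (L : Language α) (n : ℕ) : ℕ :=
  sSup {k | ∃ S : Finset (List α), PairwiseDissimilar L n S ∧ S.card = k}

/-- `S` is a uniformly `n`-dissimilar set of strings for `L`. -/
def UniformlyDissimilar {α : Type*} (L : Language α) (n : ℕ) (S : Finset (List α)) : Prop :=
  ∀ w ∈ S, ∃ v : List α, (w ++ v).length ≤ n ∧ (w ++ v) ∈ L ∧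
    ∀ w' ∈ S, w' ≠ w → (w' ++ v).length ≤ n ∧ (w' ++ v) ∉ L

/-- `U_L(n)` : the maximum cardinality of a uniformly `n`-dissimilar set for `L`. -/
noncomputable def dissimU {α : Type*} (L : Language α) (n : ℕ) : ℕ :=
  sSup {k | ∃ S : Finset (List α), UniformlyDissimilar L n S ∧ S.card = k}

/-- Evaluation in `G` of a word over the alphabet `X ∪ X⁻¹`, encoded as `↥X × Bool`
(`(x, false)` stands for the generator `x` and `(x, true)` for its inverse `x⁻¹`). -/
def wordEval {G : Type*} [Group G] (X : Finset G) (w : List (↥X × Bool)) : G :=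
  (w.map fun p => if p.2 then (p.1 : G)⁻¹ else (p.1 : G)).prod

/-- The word problem language `W(G,X)` over the alphabet `X ∪ X⁻¹`: all words whose
product in `G` is the identity. -/
def wordProblem {G : Type*} [Group G] (X : Finset G) : Language (↥X × Bool) :=
  {w | wordEval X w = 1}

/-- The growth function `g_G^X(n)` of `G` with respect to `X`: the number of group
elements of word length at most `n`. -/
noncomputable def growthFn {G : Type*} [Group G] (X : Finset G) (n : ℕ) : ℕ :=
  Nat.card {g : G // ∃ w : List (↥X × Bool), w.length ≤ n ∧ wordEval X w = g}

/-!
A computation on `w ++ v` passes through a configuration at which exactly `w` has been read.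
Uniform dissimilarity forces these intermediate configurations to differ for different `w`, while
a register that makes at most `T` moves by elements of length at most `C` stays in the ball of
radius `C * T`. Hence `U_L(n) ≤ |Q| * g(C * T)` with `T = max_{m ≤ n} t(m) = t(φ n)` for some
`φ n ≤ n`. Since `g ≥ 1` and `g(C * t n) = o(U_L(n))`, the function `U_L` tends to infinity; being
monotone, it then also dominates `g(C * t (φ n))`, so that `U_L = o(U_L)`, which is absurd.
-/

namespace GAutomaton

variable {α : Type*} {G : Type*} [Group G] {M : GAutomaton α G}

lemma Step.append {c c' : M.Q × G × List α} (h : M.Step c c') (v : List α) :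
    M.Step (c.1, c.2.1, c.2.2 ++ v) (c'.1, c'.2.1, c'.2.2 ++ v) := by
  obtain ⟨σ, m, hδ, hm, hσ⟩ := h
  refine ⟨σ, m, hδ, hm, ?_⟩
  cases σ <;> simp_all

lemma Step.exists_of_cons_append {q : M.Q} {x : G} {a : α} {w v : List α}
    {d : M.Q × G × List α} (h : M.Step (q, x, a :: w ++ v) d) :
    ∃ p z u, d = (p, z, u ++ v) ∧ M.Step (q, x, a :: w) (p, z, u) := by
  obtain ⟨p, z, u⟩ := d
  obtain ⟨_ | s, m, hδ, hm, hσ⟩ := h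
  · exact ⟨p, z, a :: w, by simpa using hσ, none, m, hδ, hm, rfl⟩
  · obtain ⟨rfl, rfl⟩ : a = s ∧ w ++ v = u := by simpa using hσ
    exact ⟨p, z, w, rfl, some a, m, hδ, hm, rfl⟩

lemma StepsIn.append {k : ℕ} {c c' : M.Q × G × List α} (h : M.StepsIn k c c') (v : List α) :
    M.StepsIn k (c.1, c.2.1, c.2.2 ++ v) (c'.1, c'.2.1, c'.2.2 ++ v) := by
  induction k generalizing c with
  | zero => cases h; rfl
  | succ k ih =>
    obtain ⟨d, hcd, hd⟩ := h
    exact ⟨_, hcd.append v, ih hd⟩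

lemma StepsIn.trans {k l : ℕ} {c d e : M.Q × G × List α} (hcd : M.StepsIn k c d)
    (hde : M.StepsIn l d e) : M.StepsIn (k + l) c e := by
  induction k generalizing c with
  | zero => cases hcd; simpa using hde
  | succ k ih =>
    obtain ⟨b, hcb, hbd⟩ := hcd
    rw [Nat.succ_add]
    exact ⟨b, hcb, ih hbd⟩

lemma StepsIn.exists_of_append {k : ℕ} {q q' : M.Q} {x y : G} {w v : List α}
    (h : M.StepsIn k (q, x, w ++ v) (q', y, [])) :
    ∃ i j p z, i + j = k ∧ M.StepsIn i (q, x, w) (p, z, []) ∧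
      M.StepsIn j (p, z, v) (q', y, []) := by
  induction k generalizing q x w with
  | zero =>
    obtain ⟨rfl, rfl, rfl, rfl⟩ : q = q' ∧ x = y ∧ w = [] ∧ v = [] := by simpa [StepsIn] using h
    exact ⟨0, 0, q, x, rfl, rfl, rfl⟩
  | succ k ih =>
    rcases w with _ | ⟨a, w⟩
    · exact ⟨0, k + 1, q, x, Nat.zero_add _, rfl, h⟩
    · obtain ⟨_, hfirst, hrest⟩ := h
      obtain ⟨p, z, u, rfl, hstep⟩ := hfirst.exists_of_cons_append
      obtain ⟨i, j, p', z', hij, hu, hv⟩ := ih hrest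
      exact ⟨i + 1, j, p', z', by lia, ⟨_, hstep, hu⟩, hv⟩

/-- `M.Reaches w c`: some computation reads all of `w` and ends with state and register `c`. -/
def Reaches (M : GAutomaton α G) (w : List α) (c : M.Q × G) : Prop :=
  ∃ k, M.StepsIn k (M.q0, 1, w) (c.1, c.2, [])

/-- `M.AcceptsFrom c v`: some computation started with state and register `c` accepts `v`. -/
def AcceptsFrom (M : GAutomaton α G) (c : M.Q × G) (v : List α) : Prop :=
  ∃ k, ∃ q ∈ M.acc, M.StepsIn k (c.1, c.2, v) (q, 1, [])

lemma Reaches.append_mem_lang {w v : List α} {c : M.Q × G} (hw : M.Reaches w c)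
    (hv : M.AcceptsFrom c v) : w ++ v ∈ M.lang := by
  obtain ⟨i, hi⟩ := hw
  obtain ⟨j, q, hq, hj⟩ := hv
  exact ⟨i + j, i + j, le_rfl, q, hq, (hi.append v).trans hj⟩

lemma AcceptsIn.mono {w : List α} {s t : ℕ} (h : M.AcceptsIn w s) (hst : s ≤ t) :
    M.AcceptsIn w t :=
  let ⟨k, hk, hacc⟩ := h
  ⟨k, hk.trans hst, hacc⟩

end GAutomaton

section WordBall

open Filter

variable {G : Type*} [Group G] {X : Finset G}

lemma wordEval_append (u v : List (↥X × Bool)) :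
    wordEval X (u ++ v) = wordEval X u * wordEval X v := by
  simp [wordEval]

lemma wordEval_surjective (hX : Subgroup.closure (X : Set G) = ⊤) :
    Function.Surjective (wordEval X) := by
  intro g
  have hg : g ∈ Subgroup.closure (X : Set G) := hX ▸ Subgroup.mem_top g
  induction hg using Subgroup.closure_induction_left with
  | one => exact ⟨[], rfl⟩
  | mul_left x hx y _ ih =>
    obtain ⟨w, rfl⟩ := ih
    exact ⟨(⟨x, hx⟩, false) :: w, by simp [wordEval]⟩
  | inv_mul_cancel x hx y _ ih =>
    obtain ⟨w, rfl⟩ := ih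
    exact ⟨(⟨x, hx⟩, true) :: w, by simp [wordEval]⟩

/-- The ball of radius `n` around the identity in the word metric of `X`; its cardinality is
`growthFn X n`. -/
def wordBall (X : Finset G) (n : ℕ) : Set G :=
  {g | ∃ w : List (↥X × Bool), w.length ≤ n ∧ wordEval X w = g}

lemma wordBall_finite (X : Finset G) (n : ℕ) : (wordBall X n).Finite :=
  (List.finite_length_le (↥X × Bool) n).image (wordEval X)

lemma one_mem_wordBall (X : Finset G) (n : ℕ) : 1 ∈ wordBall X n :=
  ⟨[], n.zero_le, rfl⟩

lemma wordBall_mono (X : Finset G) : Monotone (wordBall X) :=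
  fun _ _ hmn _ ⟨w, hw, hg⟩ => ⟨w, hw.trans hmn, hg⟩

lemma mul_mem_wordBall {m n : ℕ} {x y : G} (hx : x ∈ wordBall X m) (hy : y ∈ wordBall X n) :
    x * y ∈ wordBall X (m + n) := by
  obtain ⟨u, hu, rfl⟩ := hx
  obtain ⟨v, hv, rfl⟩ := hy
  exact ⟨u ++ v, by simpa using add_le_add hu hv, wordEval_append u v⟩

lemma eventually_mem_wordBall (hX : Subgroup.closure (X : Set G) = ⊤) (g : G) :
    ∀ᶠ n in atTop, g ∈ wordBall X n := by
  obtain ⟨w, rfl⟩ := wordEval_surjective hX g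
  filter_upwards [eventually_ge_atTop w.length] with n hn using ⟨w, hn, rfl⟩

lemma growthFn_eq_ncard_wordBall (X : Finset G) (n : ℕ) :
    growthFn X n = (wordBall X n).ncard :=
  rfl

lemma growthFn_pos (X : Finset G) (n : ℕ) : 0 < growthFn X n :=
  (Set.ncard_pos (wordBall_finite X n)).2 ⟨1, one_mem_wordBall X n⟩

end WordBall

namespace GAutomaton

open Filter

variable {α : Type*} {G : Type*} [Group G] {X : Finset G} {M : GAutomaton α G}

lemma exists_forall_multiplier_mem_wordBall (M : GAutomaton α G)
    (hX : Subgroup.closure (X : Set G) = ⊤) :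
    ∃ C, 0 < C ∧ ∀ tr ∈ M.δ, tr.2.2.2 ∈ wordBall X C :=
  ((eventually_gt_atTop 0).and <| (eventually_all_finite M.finδ).2 fun _ _ =>
    eventually_mem_wordBall hX _).exists

lemma StepsIn.inv_mul_register_mem_wordBall {C k : ℕ}
    (hC : ∀ tr ∈ M.δ, tr.2.2.2 ∈ wordBall X C) {c c' : M.Q × G × List α}
    (h : M.StepsIn k c c') : c.2.1⁻¹ * c'.2.1 ∈ wordBall X (C * k) := by
  induction k generalizing c with
  | zero => cases h; simpa using one_mem_wordBall X 0
  | succ k ih =>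
    obtain ⟨d, ⟨σ, m, hδ, hm, -⟩, hd⟩ := h
    have hmul : m * (d.2.1⁻¹ * c'.2.1) ∈ wordBall X (C + C * k) :=
      mul_mem_wordBall (hC _ hδ) (ih hd)
    rw [hm] at hmul
    simpa [mul_assoc, Nat.mul_succ, add_comm] using hmul

lemma AcceptsIn.exists_reaches_acceptsFrom {C T : ℕ} {w v : List α}
    (hC : ∀ tr ∈ M.δ, tr.2.2.2 ∈ wordBall X C) (h : M.AcceptsIn (w ++ v) T) :
    ∃ c ∈ Set.univ ×ˢ wordBall X (C * T), M.Reaches w c ∧ M.AcceptsFrom c v := by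
  obtain ⟨k, hk, q, hq, hsteps⟩ := h
  obtain ⟨i, j, p, z, hij, hw, hv⟩ := hsteps.exists_of_append
  have hz : z ∈ wordBall X (C * i) := by simpa using hw.inv_mul_register_mem_wordBall hC
  have hiT : i ≤ T := by lia
  exact ⟨(p, z), ⟨trivial, wordBall_mono X (Nat.mul_le_mul_left C hiT) hz⟩, ⟨i, hw⟩, j, q, hq, hv⟩

end GAutomaton

section Dissimilarity

variable {α : Type*} {L : Language α} {n : ℕ}

lemma UniformlyDissimilar.mono {m : ℕ} {S : Finset (List α)} (hS : UniformlyDissimilar L m S)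
    (hmn : m ≤ n) : UniformlyDissimilar L n S := by
  intro w hw
  obtain ⟨v, hlen, hmem, hother⟩ := hS w hw
  exact ⟨v, hlen.trans hmn, hmem, fun w' hw' hne =>
    ⟨(hother w' hw' hne).1.trans hmn, (hother w' hw' hne).2⟩⟩

lemma dissimU_le {B : ℕ} (hB : ∀ S, UniformlyDissimilar L n S → S.card ≤ B) : dissimU L n ≤ B :=
  csSup_le' <| by rintro _ ⟨S, hS, rfl⟩; exact hB S hS

lemma monotone_dissimU (hL : ∀ n, ∃ B, ∀ S, UniformlyDissimilar L n S → S.card ≤ B) :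
    Monotone (dissimU L) := by
  intro m n hmn
  obtain ⟨B, hB⟩ := hL n
  refine csSup_le_csSup' ⟨B, ?_⟩ ?_
  · rintro _ ⟨S, hS, rfl⟩
    exact hB S hS
  · rintro _ ⟨S, hS, rfl⟩
    exact ⟨S, hS.mono hmn, rfl⟩

lemma UniformlyDissimilar.card_le_ncard {κ : Type*} {S : Finset (List α)}
    (hS : UniformlyDissimilar L n S) {B : Set κ} (hB : B.Finite)
    {reaches : List α → κ → Prop} {accepts : κ → List α → Prop}
    (hsound : ∀ ⦃w v c⦄, reaches w c → accepts c v → w ++ v ∈ L)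
    (hcomplete : ∀ ⦃w v⦄, w ++ v ∈ L → (w ++ v).length ≤ n →
      ∃ c ∈ B, reaches w c ∧ accepts c v) :
    S.card ≤ B.ncard := by
  have hseparating : ∀ w ∈ S, ∃ c ∈ B, reaches w c ∧ ∀ w' ∈ S, reaches w' c → w' = w := by
    intro w hw
    obtain ⟨v, hlen, hmem, hother⟩ := hS w hw
    obtain ⟨c, hcB, hwc, hcv⟩ := hcomplete hmem hlen
    refine ⟨c, hcB, hwc, fun w' hw' hw'c => ?_⟩
    by_contra hne
    exact (hother w' hw' hne).2 (hsound hw'c hcv)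
  rw [Set.ncard_eq_toFinset_card B hB]
  refine Finset.card_le_card_of_forall_subsingleton
    (fun w c => reaches w c ∧ ∀ w' ∈ S, reaches w' c → w' = w) (by simpa using hseparating) ?_
  rintro c - w ⟨hw, hwc, -⟩ w' ⟨-, -, hunique⟩
  exact hunique w hw hwc

lemma UniformlyDissimilar.card_le_mul_growthFn {G : Type*} [Group G] {X : Finset G}
    {M : GAutomaton α G} {C T : ℕ} {S : Finset (List α)} (hS : UniformlyDissimilar M.lang n S)
    (hC : ∀ tr ∈ M.δ, tr.2.2.2 ∈ wordBall X C)
    (hT : ∀ w ∈ M.lang, w.length ≤ n → M.AcceptsIn w T) :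
    S.card ≤ Nat.card M.Q * growthFn X (C * T) := by
  have := M.finQ
  rw [growthFn_eq_ncard_wordBall, ← Set.ncard_univ, ← Set.ncard_prod]
  exact hS.card_le_ncard (Set.finite_univ.prod (wordBall_finite X _))
    (fun _ _ _ hw hv => hw.append_mem_lang hv)
    (fun _ _ hmem hlen => (hT _ hmem hlen).exists_reaches_acceptsFrom hC)

end Dissimilarity

section Asymptotics

open Filter Asymptotics

lemma isLittleO_comp_of_le {ι E F : Type*} [LinearOrder ι] [LocallyFiniteOrderBot ι] [Nonempty ι]
    [Norm E] [Norm F] {f : ι → E} {u : ι → F} (hfu : f =o[atTop] u)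
    (hmono : Monotone fun n => ‖u n‖) (htop : Tendsto (fun n => ‖u n‖) atTop atTop)
    {φ : ι → ι} (hφ : ∀ n, φ n ≤ n) : (f ∘ φ) =o[atTop] u := by
  refine isLittleO_iff.2 fun c hc => ?_
  obtain ⟨N, hN⟩ := eventually_atTop.1 (hfu.def hc)
  obtain ⟨A, hA⟩ := ((Set.finite_Iic N).image fun m => ‖f m‖).bddAbove
  filter_upwards [(htop.const_mul_atTop hc).eventually_ge_atTop A] with n hn
  rcases le_total N (φ n) with hlate | hearly
  · exact (hN _ hlate).trans (mul_le_mul_of_nonneg_left (hmono (hφ n)) hc.le)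
  · exact (hA (Set.mem_image_of_mem _ hearly)).trans hn

end Asymptotics

open Filter Asymptotics in
theorem not_recognizable_of_growth_littleO_general {G : Type*} [Group G] (X : Finset G)
    (hX : Subgroup.closure (X : Set G) = ⊤) {α : Type*} (L : Language α) (t : ℕ → ℕ)
    (h : ∀ C : ℕ, 0 < C →
      (fun n : ℕ => (growthFn X (C * t n) : ℝ)) =o[atTop]
        fun n : ℕ => (dissimU L n : ℝ)) :
    ¬ GRecognizableInTime G L t := by
  rintro ⟨M, rfl, hM⟩
  obtain ⟨C, hCpos, hC⟩ := M.exists_forall_multiplier_mem_wordBall hX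
  choose φ hφ hmax using fun n =>
    Set.exists_max_image (Set.Iic n) t (Set.finite_Iic n) Set.nonempty_Iic
  have hcard (n : ℕ) (S) (hS : UniformlyDissimilar M.lang n S) :
      S.card ≤ Nat.card M.Q * growthFn X (C * t (φ n)) :=
    hS.card_le_mul_growthFn hC fun w hw hlen => (hM w hw).mono (hmax n _ hlen)
  have hmono : Monotone fun n => ‖(dissimU M.lang n : ℝ)‖ := fun _ _ hmn => by
    simpa using monotone_dissimU (fun n => ⟨_, hcard n⟩) hmn
  have hone : (fun _ => (1 : ℝ)) =O[atTop] fun n => (growthFn X (C * t n) : ℝ) :=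
    .of_norm_le fun n => by simpa using Nat.succ_le_of_lt (growthFn_pos X (C * t n))
  have htop : Tendsto (fun n => ‖(dissimU M.lang n : ℝ)‖) atTop atTop :=
    (isLittleO_const_left_of_ne one_ne_zero).1 (hone.trans_isLittleO (h C hCpos))
  have hU : (fun n => (dissimU M.lang n : ℝ)) =O[atTop] fun n => (growthFn X (C * t (φ n)) : ℝ) :=
    .of_bound (Nat.card M.Q) <| .of_forall fun n => by
      simpa using mod_cast dissimU_le (hcard n)
  refine isLittleO_irrefl ?_ (hU.trans_isLittleO (isLittleO_comp_of_le (h C hCpos) hmono htop hφ))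
  exact ((htop.eventually_gt_atTop 0).mono fun _ => norm_pos_iff.1).frequently

open Filter Asymptotics in
/-- If `G` is finitely generated with generating set `X` and, for every
constant `C > 0`, `g_G^X(C·t(n)) ∈ o(U_L(n))`, then `L` is not recognized by any weakly
`t(n)` time-bounded `G`-automaton. -/
theorem not_recognizable_of_growth_littleO {G : Type*} [Group G] (X : Finset G)
    (hX : Subgroup.closure (X : Set G) = ⊤)
    {α : Type*} [Fintype α] (L : Language α) (t : ℕ → ℕ)
    (h : ∀ C : ℕ, 0 < C →
      (fun n : ℕ => (growthFn X (C * t n) : ℝ)) =o[atTop]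
        fun n : ℕ => (dissimU L n : ℝ)) :
    ¬ GRecognizableInTime G L t :=
  not_recognizable_of_growth_littleO_general X hX L t h
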